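/- Let Σ be a well-posed system on X whose right-hand side f is K-bounded with respect to a nonempty closed set A ⊆ X with κ₁ a linear function. If there exists a finite-step eISS Lyapunov function for Σ with respect to A, then Σ is eISS with respect to A. -/

import Mathlib

noncomputable section

/-- Class `K` comparison functions on `[0,∞)`. -/
def ClassK (γ : ℝ → ℝ) : Prop :=
  ContinuousOn γ (Set.Ici 0) ∧ StrictMonoOn γ (Set.Ici 0) ∧ γ 0 = 0

/-- Class `K∞` comparison functions: class `K` and unbounded. -/
def ClassKinf (γ : ℝ → ℝ) : Prop :=
  ClassK γ ∧ ∀ c : ℝ, ∃ s : ℝ, 0 ≤ s ∧ c < γ s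

/-- Class `KL` comparison functions. -/
def ClassKL (β : ℝ → ℝ → ℝ) : Prop :=
  ContinuousOn (fun p : ℝ × ℝ => β p.1 p.2) (Set.Ici 0 ×ˢ Set.Ici 0) ∧
    (∀ t : ℝ, 0 ≤ t → ClassK fun r => β r t) ∧
    (∀ r : ℝ, 0 < r → StrictAntiOn (β r) (Set.Ici 0) ∧
      Filter.Tendsto (fun t => β r t) Filter.atTop (nhds 0))

section System

variable {E : ℕ → Type*} [∀ i, NormedAddCommGroup (E i)]
variable {P : ℕ → Type*} [∀ i, NormedAddCommGroup (P i)]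

/-- Solution of the discrete-time system `x⁺ = F(x,u)` on `X = ℓ∞(ℕ,(n_i))`. -/
def traj (F : lp E ⊤ → lp P ⊤ → lp E ⊤) (ξ : lp E ⊤) (u : ℕ → lp P ⊤) : ℕ → lp E ⊤
  | 0 => ξ
  | k + 1 => F (traj F ξ u k) (u k)

/-- Admissible external inputs: uniformly bounded sequences in `U`. -/
def AdmInput (u : ℕ → lp P ⊤) : Prop :=
  ∃ C : ℝ, ∀ k, ‖u k‖ ≤ C

/-- `‖u‖_∞ = sup_k |u(k)|_∞`. -/
def inputNorm (u : ℕ → lp P ⊤) : ℝ :=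
  ⨆ k, ‖u k‖

/-- `Σ` is input-to-state stable with respect to the set `A`. -/
def ISS (F : lp E ⊤ → lp P ⊤ → lp E ⊤) (A : Set (lp E ⊤)) : Prop :=
  ∃ β γ : _, ClassKL β ∧ ClassK γ ∧
    ∀ (ξ : lp E ⊤) (u : ℕ → lp P ⊤), AdmInput u →
      ∀ k : ℕ, Metric.infDist (traj F ξ u k) A ≤
        max (β (Metric.infDist ξ A) (k : ℝ)) (γ (inputNorm u))

/-- `Σ` is exponentially input-to-state stable with respect to the set `A`. -/
def eISS (F : lp E ⊤ → lp P ⊤ → lp E ⊤) (A : Set (lp E ⊤)) : Prop :=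
  ∃ C ρ : ℝ, ∃ γ : ℝ → ℝ, 1 ≤ C ∧ 0 ≤ ρ ∧ ρ < 1 ∧ ClassK γ ∧
    ∀ (ξ : lp E ⊤) (u : ℕ → lp P ⊤), AdmInput u →
      ∀ k : ℕ, Metric.infDist (traj F ξ u k) A ≤
        max (C * ρ ^ k * Metric.infDist ξ A) (γ (inputNorm u))

/-- `f` is `K`-bounded with respect to `A`. -/
def KBounded (F : lp E ⊤ → lp P ⊤ → lp E ⊤) (A : Set (lp E ⊤)) : Prop :=
  ∃ κ₁ κ₂ : ℝ → ℝ, ClassK κ₁ ∧ ClassK κ₂ ∧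
    ∀ (ξ : lp E ⊤) (μ : lp P ⊤),
      Metric.infDist (F ξ μ) A ≤ κ₁ (Metric.infDist ξ A) + κ₂ ‖μ‖

/-!
The distances `d k` to `A` and the Lyapunov values `v k` along a trajectory are real sequences, and
the estimate only involves these. Replacing `V` by `V ^ b⁻¹` makes the sandwich linear, so assume
`b = 1`. Write `k = r + M * n` with `r < M`: iterating the decay shows that `v k` is at most
`κ ^ n * v r` or at most the gain, while the one-step bound controls `d r` by `c ^ M` times
`d 0 + M * κ₂ ‖u‖`. Enlarging `κ` we may take `0 < κ`; with `ρ = κ ^ (1 / M)` the factor `κ ^ n` is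
then at most `ρ ^ k / κ`.
-/

section ClassK

variable {γ γ' : ℝ → ℝ}

theorem ClassK.nonneg (hγ : ClassK γ) {s : ℝ} (hs : 0 ≤ s) : 0 ≤ γ s :=
  hγ.2.2 ▸ hγ.2.1.monotoneOn Set.self_mem_Ici hs hs

theorem ClassK.add (hγ : ClassK γ) (hγ' : ClassK γ') : ClassK fun s => γ s + γ' s :=
  ⟨hγ.1.add hγ'.1, hγ.2.1.add hγ'.2.1, by simp only [hγ.2.2, hγ'.2.2, add_zero]⟩

theorem ClassK.const_mul (hγ : ClassK γ) {a : ℝ} (ha : 0 < a) : ClassK fun s => a * γ s :=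
  ⟨continuousOn_const.mul hγ.1,
    fun _ hs _ ht hst => mul_lt_mul_of_pos_left (hγ.2.1 hs ht hst) ha,
    by simp only [hγ.2.2, mul_zero]⟩

theorem ClassK.rpow (hγ : ClassK γ) {p : ℝ} (hp : 0 < p) : ClassK fun s => γ s ^ p :=
  ⟨hγ.1.rpow_const fun _ _ => Or.inr hp.le,
    fun _ hs _ ht hst => Real.rpow_lt_rpow (hγ.nonneg hs) (hγ.2.1 hs ht hst) hp,
    by simp only [hγ.2.2, Real.zero_rpow hp.ne']⟩

end ClassK

section Sequences

theorem le_pow_mul_add_of_step_le {R : Type*} [CommSemiring R] [PartialOrder R] [IsOrderedRing R]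
    {d : ℕ → R} {a c : R} (hc : 1 ≤ c) (ha : 0 ≤ a)
    (hd : ∀ k, d (k + 1) ≤ c * d k + a) (n : ℕ) : d n ≤ c ^ n * (d 0 + n * a) := by
  have gronwall := discrete_gronwall_prod_general (n₀ := 0) (u := d) (b := fun _ => a)
    (c := fun _ => c) (fun k _ => hd k) (fun _ _ => zero_le_one.trans hc) n.zero_le
  simp only [Finset.prod_const, Nat.card_Ico, tsub_zero] at gronwall
  calc d n ≤ d 0 * c ^ n + ∑ k ∈ Finset.Ico 0 n, a * c ^ (n - (k + 1)) := gronwall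
    _ ≤ d 0 * c ^ n + ∑ _k ∈ Finset.Ico 0 n, a * c ^ n := by
      gcongr
      exact n.sub_le _
    _ = c ^ n * (d 0 + n * a) := by
      rw [Finset.sum_const, Nat.card_Ico, tsub_zero, nsmul_eq_mul]
      ring

theorem le_max_pow_mul_of_finite_step_le {R : Type*} [Semiring R] [LinearOrder R]
    [IsOrderedRing R] {v : ℕ → R} {g κ : R} {M : ℕ} (hκ0 : 0 ≤ κ) (hκ1 : κ ≤ 1) (hg : 0 ≤ g)
    (hv : ∀ k, v (k + M) ≤ max (κ * v k) g) (r n : ℕ) :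
    v (r + M * n) ≤ max (κ ^ n * v r) g := by
  induction n with
  | zero => simp
  | succ n ih =>
    calc v (r + M * (n + 1)) = v (r + M * n + M) := by rw [mul_add_one, add_assoc]
      _ ≤ max (κ * v (r + M * n)) g := hv _
      _ ≤ max (κ * max (κ ^ n * v r) g) g := by gcongr
      _ = max (max (κ ^ (n + 1) * v r) (κ * g)) g := by
        rw [mul_max_of_nonneg _ _ hκ0, pow_succ', mul_assoc]
      _ = max (κ ^ (n + 1) * v r) g := by
        rw [max_assoc, max_eq_right (mul_le_of_le_one_left hg hκ1)]

variable {𝕜 : Type*} [Field 𝕜] [LinearOrder 𝕜] [IsStrictOrderedRing 𝕜]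
variable {d v : ℕ → 𝕜} {a c g κ ρ wl wu : 𝕜} {M : ℕ}

theorem pow_pow_div_le (hρ0 : 0 < ρ) (hρ1 : ρ ≤ 1) (hM : 0 < M) (k : ℕ) :
    (ρ ^ M) ^ (k / M) ≤ ρ ^ k / ρ ^ M := by
  rw [le_div_iff₀ (pow_pos hρ0 M), ← pow_mul, ← pow_add]
  exact pow_le_pow_of_le_one hρ0.le hρ1 (Nat.lt_mul_div_succ k hM).le

theorem le_max_pow_div_mul_of_finite_step_le (hd0 : 0 ≤ d 0) (hc : 1 ≤ c) (ha : 0 ≤ a)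
    (hd : ∀ k, d (k + 1) ≤ c * d k + a) (hwl : 0 < wl) (hwu : 0 ≤ wu)
    (hl : ∀ k, wl * d k ≤ v k) (hu : ∀ k, v k ≤ wu * d k) (hM : 0 < M)
    (hκ0 : 0 ≤ κ) (hκ1 : κ ≤ 1) (hg : 0 ≤ g) (hv : ∀ k, v (k + M) ≤ max (κ * v k) g) (k : ℕ) :
    d k ≤ max (wu / wl * κ ^ (k / M) * (c ^ M * (d 0 + M * a))) (wl⁻¹ * g) := by
  have first_block : d (k % M) ≤ c ^ M * (d 0 + M * a) := by
    have : 0 ≤ c := zero_le_one.trans hc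
    have hr : k % M ≤ M := (Nat.mod_lt k hM).le
    calc d (k % M) ≤ c ^ (k % M) * (d 0 + (k % M : ℕ) * a) := le_pow_mul_add_of_step_le hc ha hd _
      _ ≤ c ^ M * (d 0 + M * a) := by gcongr
  have blocks : v k ≤ max (κ ^ (k / M) * v (k % M)) g := by
    simpa only [Nat.mod_add_div] using
      le_max_pow_mul_of_finite_step_le hκ0 hκ1 hg hv (k % M) (k / M)
  rcases le_max_iff.1 blocks with decay | gain
  · apply le_max_of_le_left
    rw [div_mul_eq_mul_div, div_mul_eq_mul_div, le_div_iff₀' hwl]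
    calc wl * d k ≤ κ ^ (k / M) * v (k % M) := (hl k).trans decay
      _ ≤ κ ^ (k / M) * (wu * (c ^ M * (d 0 + M * a))) := by
        gcongr
        exact (hu _).trans (by gcongr)
      _ = wu * κ ^ (k / M) * (c ^ M * (d 0 + M * a)) := by ring
  · exact le_max_of_le_right ((le_inv_mul_iff₀ hwl).2 ((hl k).trans gain))

theorem le_max_mul_pow_mul_of_finite_step_le (hd0 : 0 ≤ d 0) (hc : 1 ≤ c) (ha : 0 ≤ a)
    (hd : ∀ k, d (k + 1) ≤ c * d k + a) (hwl : 0 < wl) (hwu : 0 ≤ wu)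
    (hl : ∀ k, wl * d k ≤ v k) (hu : ∀ k, v k ≤ wu * d k) (hM : 0 < M)
    (hρ0 : 0 < ρ) (hρ1 : ρ ≤ 1) (hg : 0 ≤ g) (hv : ∀ k, v (k + M) ≤ max (ρ ^ M * v k) g) (k : ℕ) :
    d k ≤ max (2 * (wu / wl) * c ^ M / ρ ^ M * ρ ^ k * d 0)
      (2 * (wu / wl) * c ^ M * M * a + wl⁻¹ * g) := by
  have hρM0 : 0 ≤ ρ ^ M := (pow_pos hρ0 M).le
  have hρM1 : ρ ^ M ≤ 1 := pow_le_one₀ hρ0.le hρ1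
  have block_bound :=
    le_max_pow_div_mul_of_finite_step_le hd0 hc ha hd hwl hwu hl hu hM hρM0 hρM1 hg hv k
  rcases le_max_iff.1 block_bound with decay | gain
  · rcases le_total (M * a) (d 0) with state_dominates | input_dominates
    · refine le_max_of_le_left (decay.trans ?_)
      calc wu / wl * (ρ ^ M) ^ (k / M) * (c ^ M * (d 0 + M * a))
          ≤ wu / wl * (ρ ^ k / ρ ^ M) * (c ^ M * (d 0 + d 0)) := by
            gcongr
            exact pow_pow_div_le hρ0 hρ1 hM k
        _ = 2 * (wu / wl) * c ^ M / ρ ^ M * ρ ^ k * d 0 := by ring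
    · refine le_max_of_le_right (decay.trans ?_)
      calc wu / wl * (ρ ^ M) ^ (k / M) * (c ^ M * (d 0 + M * a))
          ≤ wu / wl * 1 * (c ^ M * (M * a + M * a)) := by
            gcongr
            exact pow_le_one₀ hρM0 hρM1
        _ = 2 * (wu / wl) * c ^ M * M * a := by ring
        _ ≤ 2 * (wu / wl) * c ^ M * M * a + wl⁻¹ * g := le_add_of_nonneg_right (by positivity)
  · exact le_max_of_le_right (gain.trans (le_add_of_nonneg_left (by positivity)))

end Sequences

section ControlSystems

variable {X U : Type*} [SeminormedAddGroup U] {f : X → U → X} {x : ℕ → X} {u : ℕ → U}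
variable {ω V : X → ℝ} {M : ℕ} {κ : ℝ} {γ : ℝ → ℝ}

/-- `x` is a solution of `x⁺ = f(x,u)` for the input `u`. -/
def IsSolution (f : X → U → X) (x : ℕ → X) (u : ℕ → U) : Prop :=
  ∀ k, x (k + 1) = f (x k) (u k)

/-- Exponential input-to-state stability of `x⁺ = f(x,u)` with respect to a measurement function
`ω` on the state space; taking the distance to `A` for `ω` gives `eISS` with respect to `A`. -/
def IsExpISS (f : X → U → X) (ω : X → ℝ) : Prop :=
  ∃ C ρ : ℝ, ∃ γ : ℝ → ℝ, 1 ≤ C ∧ 0 ≤ ρ ∧ ρ < 1 ∧ ClassK γ ∧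
    ∀ (x : ℕ → X) (u : ℕ → U), IsSolution f x u → BddAbove (Set.range fun k => ‖u k‖) →
      ∀ k, ω (x k) ≤ max (C * ρ ^ k * ω (x 0)) (γ (⨆ k, ‖u k‖))

/-- The decay condition of a finite-step Lyapunov function `V`, over `M` steps, with rate `κ` and
gain `γ`. -/
def HasFiniteStepDecay (f : X → U → X) (V : X → ℝ) (M : ℕ) (κ : ℝ) (γ : ℝ → ℝ) : Prop :=
  ∀ (x : ℕ → X) (u : ℕ → U), IsSolution f x u → BddAbove (Set.range fun k => ‖u k‖) →
    V (x M) ≤ max (κ * V (x 0)) (γ (⨆ k, ‖u k‖))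

theorem HasFiniteStepDecay.mono_rate {κ' : ℝ} (h : HasFiniteStepDecay f V M κ γ)
    (hV : ∀ ξ, 0 ≤ V ξ) (hκ : κ ≤ κ') : HasFiniteStepDecay f V M κ' γ := fun x u hx hu =>
  (h x u hx hu).trans (max_le_max_right _ (mul_le_mul_of_nonneg_right hκ (hV _)))

theorem HasFiniteStepDecay.rpow {p : ℝ} (h : HasFiniteStepDecay f V M κ γ) (hV : ∀ ξ, 0 ≤ V ξ)
    (hκ : 0 ≤ κ) (hγ : ∀ s, 0 ≤ s → 0 ≤ γ s) (hp : 0 ≤ p) :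
    HasFiniteStepDecay f (fun ξ => V ξ ^ p) M (κ ^ p) (fun s => γ s ^ p) := by
  intro x u hx hu
  have hκV : 0 ≤ κ * V (x 0) := mul_nonneg hκ (hV _)
  have hγu : 0 ≤ γ (⨆ k, ‖u k‖) := hγ _ (Real.iSup_nonneg fun _ => norm_nonneg _)
  calc V (x M) ^ p ≤ max (κ * V (x 0)) (γ (⨆ k, ‖u k‖)) ^ p :=
        Real.rpow_le_rpow (hV _) (h x u hx hu) hp
    _ = max (κ ^ p * V (x 0) ^ p) (γ (⨆ k, ‖u k‖) ^ p) := by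
      rw [(Real.monotoneOn_rpow_Ici_of_exponent_nonneg hp).map_max hκV hγu,
        Real.mul_rpow hκ (hV _)]

theorem HasFiniteStepDecay.apply_add_le (h : HasFiniteStepDecay f V M κ γ)
    (hγ : MonotoneOn γ (Set.Ici 0)) (hx : IsSolution f x u)
    (hu : BddAbove (Set.range fun k => ‖u k‖)) (k : ℕ) :
    V (x (k + M)) ≤ max (κ * V (x k)) (γ (⨆ j, ‖u j‖)) := by
  have shift_le : ⨆ j, ‖u (k + j)‖ ≤ ⨆ j, ‖u j‖ := ciSup_le fun j => le_ciSup hu (k + j)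
  have shift_bdd : BddAbove (Set.range fun j => ‖u (k + j)‖) :=
    hu.mono (Set.range_comp_subset_range (k + ·) fun j => ‖u j‖)
  have nonneg (w : ℕ → U) : 0 ≤ ⨆ j, ‖w j‖ := Real.iSup_nonneg fun _ => norm_nonneg _
  calc V (x (k + M)) ≤ max (κ * V (x k)) (γ (⨆ j, ‖u (k + j)‖)) :=
        h (fun j => x (k + j)) (fun j => u (k + j)) (fun j => hx (k + j)) shift_bdd
    _ ≤ max (κ * V (x k)) (γ (⨆ j, ‖u j‖)) :=
        max_le_max_left _ (hγ (nonneg _) (nonneg _) shift_le)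

theorem HasFiniteStepDecay.isExpISS_of_linear_bounds {c wl wu : ℝ} {κ₂ : ℝ → ℝ}
    (h : HasFiniteStepDecay f V M κ γ) (hM : 0 < M) (hκ0 : 0 < κ) (hκ1 : κ < 1) (hγ : ClassK γ)
    (hω : ∀ ξ, 0 ≤ ω ξ) (hc : 1 ≤ c) (hκ₂ : ClassK κ₂)
    (hf : ∀ ξ μ, ω (f ξ μ) ≤ c * ω ξ + κ₂ ‖μ‖) (hwl : 0 < wl) (hwu : 0 < wu)
    (hV : ∀ ξ, wl * ω ξ ≤ V ξ ∧ V ξ ≤ wu * ω ξ) : IsExpISS f ω := by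
  set ρ : ℝ := κ ^ (M : ℝ)⁻¹
  have hρ0 : 0 < ρ := Real.rpow_pos_of_pos hκ0 _
  have hρ1 : ρ < 1 := Real.rpow_lt_one hκ0.le hκ1 (inv_pos.2 (Nat.cast_pos.2 hM))
  have hρM : ρ ^ M = κ := Real.rpow_inv_natCast_pow hκ0.le hM.ne'
  set L : ℝ := 2 * (wu / wl) * c ^ M
  have hL0 : 0 < L * M := by positivity
  refine ⟨max 1 (L / ρ ^ M), ρ, fun s => L * M * κ₂ s + wl⁻¹ * γ s, le_max_left _ _, hρ0.le, hρ1,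
    (hκ₂.const_mul hL0).add (hγ.const_mul (inv_pos.2 hwl)), fun x u hx hu k => ?_⟩
  have hu0 : 0 ≤ ⨆ j, ‖u j‖ := Real.iSup_nonneg fun _ => norm_nonneg _
  have one_step (j : ℕ) : ω (x (j + 1)) ≤ c * ω (x j) + κ₂ (⨆ j, ‖u j‖) := by
    rw [hx j]
    exact (hf _ _).trans (by gcongr; exact hκ₂.2.1.monotoneOn (norm_nonneg _) hu0 (le_ciSup hu j))
  have finite_step (j : ℕ) : V (x (j + M)) ≤ max (ρ ^ M * V (x j)) (γ (⨆ j, ‖u j‖)) := by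
    rw [hρM]
    exact h.apply_add_le hγ.2.1.monotoneOn hx hu j
  have hωx := hω (x 0)
  calc ω (x k) ≤ max (L / ρ ^ M * ρ ^ k * ω (x 0)) (L * M * κ₂ (⨆ j, ‖u j‖) + _) :=
        le_max_mul_pow_mul_of_finite_step_le (hω (x 0)) hc (hκ₂.nonneg hu0) one_step hwl hwu.le
          (fun j => (hV (x j)).1) (fun j => (hV (x j)).2) hM hρ0 hρ1.le (hγ.nonneg hu0)
          finite_step k
    _ ≤ max (max 1 (L / ρ ^ M) * ρ ^ k * ω (x 0)) _ := by gcongr; exact le_max_right _ _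

theorem stmt9_general {c wl wu b : ℝ} {κ₂ : ℝ → ℝ} (hω : ∀ ξ, 0 ≤ ω ξ) (hκ₂ : ClassK κ₂)
    (hf : ∀ ξ μ, ω (f ξ μ) ≤ c * ω ξ + κ₂ ‖μ‖) (hM : 0 < M)
    (hwl : 0 < wl) (hwu : 0 < wu) (hb : 0 < b) (hκ1 : κ < 1) (hγ : ClassK γ)
    (hV : ∀ ξ, wl * ω ξ ^ b ≤ V ξ ∧ V ξ ≤ wu * ω ξ ^ b)
    (hdecay : HasFiniteStepDecay f V M κ γ) : IsExpISS f ω := by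
  have hp : 0 < b⁻¹ := inv_pos.2 hb
  have hωb (ξ : X) : 0 ≤ ω ξ ^ b := Real.rpow_nonneg (hω ξ) b
  have hV0 (ξ : X) : 0 ≤ V ξ := (mul_nonneg hwl.le (hωb ξ)).trans (hV ξ).1
  have root {w : ℝ} (hw : 0 < w) (ξ : X) : (w * ω ξ ^ b) ^ b⁻¹ = w ^ b⁻¹ * ω ξ := by
    rw [Real.mul_rpow hw.le (hωb ξ), Real.rpow_rpow_inv (hω ξ) hb.ne']
  have hκ0 : 0 < max κ 2⁻¹ := lt_max_of_lt_right (by norm_num)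
  have root_decay := (hdecay.mono_rate hV0 (le_max_left κ 2⁻¹)).rpow hV0 hκ0.le
    (fun _ => hγ.nonneg) hp.le
  refine root_decay.isExpISS_of_linear_bounds hM (Real.rpow_pos_of_pos hκ0 _)
    (Real.rpow_lt_one hκ0.le (max_lt hκ1 (by norm_num)) hp) (hγ.rpow hp) hω (le_max_right c 1) hκ₂
    (fun ξ μ => (hf ξ μ).trans ?_) (Real.rpow_pos_of_pos hwl b⁻¹) (Real.rpow_pos_of_pos hwu b⁻¹)
    fun ξ => ⟨?_, ?_⟩
  · gcongr
    exacts [hω ξ, le_max_left c 1]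
  · exact root hwl ξ ▸ Real.rpow_le_rpow (mul_nonneg hwl.le (hωb ξ)) (hV ξ).1 hp.le
  · exact root hwu ξ ▸ Real.rpow_le_rpow (hV0 ξ) (hV ξ).2 hp.le

end ControlSystems

section Trajectories

variable {F : lp E ⊤ → lp P ⊤ → lp E ⊤} {u : ℕ → lp P ⊤}

theorem admInput_iff_bddAbove : AdmInput u ↔ BddAbove (Set.range fun k => ‖u k‖) := by
  simp only [AdmInput, bddAbove_def, Set.forall_mem_range]

theorem IsSolution.eq_traj {x : ℕ → lp E ⊤} (hx : IsSolution F x u) (k : ℕ) :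
    x k = traj F (x 0) u k := by
  induction k with
  | zero => rfl
  | succ k ih => rw [hx k, traj, ← ih]

theorem hasFiniteStepDecay_of_traj {V : lp E ⊤ → ℝ} {M : ℕ} {κ : ℝ} {γ : ℝ → ℝ}
    (h : ∀ ξ (u : ℕ → lp P ⊤), AdmInput u →
      V (traj F ξ u M) ≤ max (κ * V ξ) (γ (inputNorm u))) :
    HasFiniteStepDecay F V M κ γ := by
  intro x u hx hu
  rw [hx.eq_traj M]
  exact h (x 0) u (admInput_iff_bddAbove.2 hu)

theorem IsExpISS.eISS {A : Set (lp E ⊤)} (h : IsExpISS F (Metric.infDist · A)) : eISS F A := by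
  obtain ⟨C, ρ, γ, hC, hρ0, hρ1, hγ, hbound⟩ := h
  exact ⟨C, ρ, γ, hC, hρ0, hρ1, hγ, fun ξ u hu =>
    hbound (traj F ξ u) u (fun _ => rfl) (admInput_iff_bddAbove.1 hu)⟩

end Trajectories

/-- Existence of a finite-step eISS Lyapunov function (together with `K`-boundedness
with linear `κ₁`) implies eISS. -/
theorem stmt9
    [∀ i, NormedSpace ℝ (E i)] [∀ i, FiniteDimensional ℝ (E i)] [∀ i, Nontrivial (E i)]
    [∀ i, NormedSpace ℝ (P i)] [∀ i, FiniteDimensional ℝ (P i)] [∀ i, Nontrivial (P i)]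
    (F : lp E ⊤ → lp P ⊤ → lp E ⊤)
    (A : Set (lp E ⊤)) (hAne : A.Nonempty) (hAcl : IsClosed A)
    (c : ℝ) (hc : 0 < c) (κ₂ : ℝ → ℝ) (hκ₂ : ClassK κ₂)
    (hKb : ∀ (ξ : lp E ⊤) (μ : lp P ⊤),
      Metric.infDist (F ξ μ) A ≤ c * Metric.infDist ξ A + κ₂ ‖μ‖)
    (V : lp E ⊤ → ℝ) (hVcont : Continuous V)
    (M : ℕ) (hM : 0 < M)
    (wl wu b : ℝ) (hwl : 0 < wl) (hwu : 0 < wu) (hb : 0 < b)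
    (κ : ℝ) (hκ0 : 0 ≤ κ) (hκ1 : κ < 1)
    (γ : ℝ → ℝ) (hγ : ClassK γ)
    (hsandwich : ∀ ξ : lp E ⊤,
      wl * Metric.infDist ξ A ^ b ≤ V ξ ∧ V ξ ≤ wu * Metric.infDist ξ A ^ b)
    (hdecay : ∀ (ξ : lp E ⊤) (u : ℕ → lp P ⊤), AdmInput u →
      V (traj F ξ u M) ≤ max (κ * V ξ) (γ (inputNorm u))) :
    eISS F A :=
  (stmt9_general (ω := (Metric.infDist · A)) (fun _ => Metric.infDist_nonneg) hκ₂ hKb hM hwl hwu hb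
    hκ1 hγ hsandwich (hasFiniteStepDecay_of_traj hdecay)).eISS

end System
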